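/- Let n and k be natural numbers and let 𝓘 be a nonempty family of subsets of {1, …, n} such that |A| = k for every A ∈ 𝓘. Then for every A, B ∈ 𝓘 and every i ∈ A \ B, there exist sets E ⊆ A \ B and F ⊆ B \ A satisfying: (1) |E| = |F|; (2) i ∈ E; (3) (A \ E) ∪ F ∈ 𝓘; and (4) for all M, N ∈ 𝓘, if e_A + e_{(A \ E) ∪ F} = e_M + e_N then {A, (A \ E) ∪ F} = {M, N}. -/

import Mathlib

/-- Indicator vector of a finite subset of `Fin n`. -/
def indVec {n : ℕ} (A : Finset (Fin n)) : Fin n → ℝ := fun x => if x ∈ A then 1 else 0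

/-- Generalized exchange property for an arbitrary nonempty family `𝓘` of `k`-subsets of
`{1, …, n}`: for `A, B ∈ 𝓘` and `i ∈ A \ B` there are `E ⊆ A \ B` and `F ⊆ B \ A` with
`|E| = |F|`, `i ∈ E`, `(A \ E) ∪ F ∈ 𝓘`, and `e_A + e_{(A \ E) ∪ F}` has a unique
decomposition as a sum of two indicator vectors of members of `𝓘`. -/
theorem quasimatroid_exchange (n k : ℕ) (𝓘 : Set (Finset (Fin n)))
    (hne : 𝓘.Nonempty) (hcard : ∀ A ∈ 𝓘, A.card = k) :
    ∀ A ∈ 𝓘, ∀ B ∈ 𝓘, ∀ i ∈ A \ B,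
      ∃ E ⊆ A \ B, ∃ F ⊆ B \ A,
        E.card = F.card ∧
        i ∈ E ∧
        (A \ E) ∪ F ∈ 𝓘 ∧
        (∀ M ∈ 𝓘, ∀ N ∈ 𝓘,
          indVec A + indVec ((A \ E) ∪ F) = indVec M + indVec N →
            ({A, (A \ E) ∪ F} : Set (Finset (Fin n))) = {M, N}) := by
  classical
  intro A hA B hB i hi
  let S : Finset (Finset (Fin n)) :=
    Finset.univ.filter (fun C => C ∈ 𝓘 ∧ A ∩ B ⊆ C ∧ C ⊆ A ∪ B ∧ i ∉ C)
  have hS : ∀ C, C ∈ S ↔ (C ∈ 𝓘 ∧ A ∩ B ⊆ C ∧ C ⊆ A ∪ B ∧ i ∉ C) := by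
    intro C; simp [S]
  have hBS : B ∈ S := by
    rw [hS]
    exact ⟨hB, Finset.inter_subset_right, Finset.subset_union_right, (Finset.mem_sdiff.1 hi).2⟩
  obtain ⟨C, hCS, hmin⟩ := Finset.exists_min_image S (fun C => (A \ C).card) ⟨B, hBS⟩
  obtain ⟨hC, hC1, hC2, hiC⟩ := (hS C).1 hCS
  have hiA : i ∈ A := (Finset.mem_sdiff.1 hi).1
  have hcardAC : ∀ D ∈ 𝓘, (A \ D).card = (D \ A).card := by
    intro D hD
    have h1 := Finset.card_sdiff_add_card_inter A D
    have h2 := Finset.card_sdiff_add_card_inter D A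
    rw [Finset.inter_comm D A] at h2
    have h3 := hcard A hA
    have h4 := hcard D hD
    omega
  have hEq : (A \ (A \ C)) ∪ (C \ A) = C := by
    ext x
    simp only [Finset.mem_union, Finset.mem_sdiff]
    tauto
  -- the key claim: the summand avoiding `i` must be `C`, the other one `A`
  have key : ∀ M ∈ 𝓘, ∀ N ∈ 𝓘, indVec A + indVec C = indVec M + indVec N → i ∉ N →
      N = C ∧ M = A := by
    intro M hM N hN h hiN
    have hx : ∀ x, ((x ∈ A ∧ x ∈ C → x ∈ M ∧ x ∈ N) ∧ (x ∈ N → x ∈ A ∨ x ∈ C)) ∧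
        ((x ∈ N ↔ x ∈ C) → (x ∈ M ↔ x ∈ A)) := by
      intro x
      have h' := congrFun h x
      simp only [Pi.add_apply, indVec] at h'
      by_cases a : x ∈ A <;> by_cases b : x ∈ C <;> by_cases c : x ∈ M <;>
        by_cases d : x ∈ N <;> simp [a, b, c, d] at h' ⊢ <;> norm_num at h'
    have hNS : N ∈ S := by
      rw [hS]
      refine ⟨hN, ?_, ?_, hiN⟩
      · intro x hxx
        exact ((hx x).1.1 ⟨(Finset.mem_inter.1 hxx).1, hC1 hxx⟩).2
      · intro x hxx
        rcases (hx x).1.2 hxx with h1 | h1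
        · exact Finset.mem_union_left _ h1
        · exact hC2 h1
    have hsub1 : A \ N ⊆ A \ C := by
      intro x hxx
      rw [Finset.mem_sdiff] at hxx ⊢
      exact ⟨hxx.1, fun hc => hxx.2 ((hx x).1.1 ⟨hxx.1, hc⟩).2⟩
    have hsub2 : N \ A ⊆ C \ A := by
      intro x hxx
      rw [Finset.mem_sdiff] at hxx ⊢
      exact ⟨((hx x).1.2 hxx.1).resolve_left hxx.2, hxx.2⟩
    have hle : (A \ C).card ≤ (A \ N).card := hmin N hNS
    have e1 : A \ N = A \ C := Finset.eq_of_subset_of_card_le hsub1 hle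
    have e2 : N \ A = C \ A := Finset.eq_of_subset_of_card_le hsub2 (by
      rw [← hcardAC C hC, ← hcardAC N hN]; exact hle)
    have hNC : N = C := by
      ext x
      have t1 := Finset.ext_iff.1 e1 x
      have t2 := Finset.ext_iff.1 e2 x
      simp only [Finset.mem_sdiff] at t1 t2
      tauto
    refine ⟨hNC, ?_⟩
    ext x
    exact (hx x).2 (by rw [hNC])
  refine ⟨A \ C, ?_, C \ A, ?_, hcardAC C hC, Finset.mem_sdiff.2 ⟨hiA, hiC⟩, ?_, ?_⟩
  · intro x hxx
    rw [Finset.mem_sdiff] at hxx ⊢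
    exact ⟨hxx.1, fun hb => hxx.2 (hC1 (Finset.mem_inter.2 ⟨hxx.1, hb⟩))⟩
  · intro x hxx
    rw [Finset.mem_sdiff] at hxx ⊢
    exact ⟨(Finset.mem_union.1 (hC2 hxx.1)).resolve_left hxx.2, hxx.2⟩
  · rw [hEq]; exact hC
  · rw [hEq]
    intro M hM N hN h
    by_cases hiN : i ∈ N
    · have hiM : i ∉ M := by
        intro hiM
        have h' := congrFun h i
        simp [indVec, hiA, hiC, hiN, hiM] at h'
      obtain ⟨h1, h2⟩ := key N hN M hM (by rw [h, add_comm]) hiM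
      rw [h1, h2, Set.pair_comm]
    · obtain ⟨h1, h2⟩ := key M hM N hN h hiN
      rw [h1, h2]
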